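/- Let (g₀, g₋₁, l₁, l₂, l₃) be a 2-term L∞-algebra over ℝ and let g̃ = (g̃₀, g̃₋₁, l̃₁, l̃₂, l̃₃) be the associated 2-term L∞-algebra. Define F₀ : g̃₀ → g₀ by F₀(x,φ) = x, F₁ = id : g₋₁ → g₋₁, and F₂ : g̃₀ × g̃₀ → g₋₁ by F₂((x,φ),(y,ψ)) = ½(φ(y) − ψ(x)). Then (F₀, F₁, F₂) is an L∞-algebra homomorphism from g̃ to g, i.e. for all a,b,c ∈ g̃₀ and n ∈ g₋₁: (i) F₀(l̃₁(n)) = l₁(F₁(n)); (ii) F₀(l̃₂(a,b)) − l₂(F₀(a),F₀(b)) = l₁(F₂(a,b)); (iii) F₁(l̃₂(a,n)) − l₂(F₀(a),F₁(n)) = F₂(a, l̃₁(n)); (iv) F₂(l̃₂(a,b),c) + F₂(l̃₂(b,c),a) + F₂(l̃₂(c,a),b) + F₁(l̃₃(a,b,c)) = l₂(F₀(a),F₂(b,c)) + l₂(F₀(b),F₂(c,a)) + l₂(F₀(c),F₂(a,b)) + l₃(F₀(a),F₀(b),F₀(c)). -/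

import Mathlib

/-- A 2-term L∞-algebra over ℝ. -/
structure TwoTermLinfty (G0 G1 : Type*) [AddCommGroup G0] [Module ℝ G0]
    [AddCommGroup G1] [Module ℝ G1] where
  l1 : G1 →ₗ[ℝ] G0
  l2 : G0 →ₗ[ℝ] G0 →ₗ[ℝ] G0
  l2' : G0 →ₗ[ℝ] G1 →ₗ[ℝ] G1
  l3 : G0 →ₗ[ℝ] G0 →ₗ[ℝ] G0 →ₗ[ℝ] G1
  skew : ∀ x y, l2 x y = - l2 y x
  alt₁ : ∀ x y z, l3 x y z = - l3 y x z
  alt₂ : ∀ x y z, l3 x y z = - l3 x z y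
  ident_a : ∀ x m, l1 (l2' x m) = l2 x (l1 m)
  ident_b : ∀ m n, l2' (l1 m) n = - l2' (l1 n) m
  ident_c : ∀ x y z,
    l2 x (l2 y z) + l2 y (l2 z x) + l2 z (l2 x y) = l1 (l3 x y z)
  ident_d : ∀ x y m,
    l3 x y (l1 m) = l2' x (l2' y m) - l2' y (l2' x m) - l2' (l2 x y) m
  ident_e : ∀ w x y z,
    l3 (l2 w x) y z - l3 (l2 w y) x z + l3 (l2 w z) x y + l3 (l2 x y) w z
      - l3 (l2 x z) w y + l3 (l2 y z) w x
    = l2' w (l3 x y z) - l2' x (l3 w y z) + l2' y (l3 w x z) - l2' z (l3 w x y)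

section Tilde

variable {G0 G1 : Type*} [AddCommGroup G0] [Module ℝ G0] [AddCommGroup G1] [Module ℝ G1]

/-- `l̃₁(n) = (l₁(n), z ↦ l₂(z,n))`. -/
noncomputable def tl1 (T : TwoTermLinfty G0 G1) (n : G1) : G0 × (G0 →ₗ[ℝ] G1) :=
  (T.l1 n, T.l2'.flip n)

/-- `l̃₂` on two degree-0 elements `(x,φ)`, `(y,ψ)`. -/
noncomputable def tl2 (T : TwoTermLinfty G0 G1) (a b : G0 × (G0 →ₗ[ℝ] G1)) :
    G0 × (G0 →ₗ[ℝ] G1) :=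
  (T.l2 a.1 b.1 + (1/2 : ℝ) • T.l1 (a.2 b.1) - (1/2 : ℝ) • T.l1 (b.2 a.1),
   T.l3 a.1 b.1 + (T.l2' a.1) ∘ₗ b.2 - b.2 ∘ₗ (T.l2 a.1)
     - (1/2 : ℝ) • T.l2'.flip (b.2 a.1)
     - (T.l2' b.1) ∘ₗ a.2 + a.2 ∘ₗ (T.l2 b.1)
     + (1/2 : ℝ) • T.l2'.flip (a.2 b.1)
     + a.2 ∘ₗ (T.l1 ∘ₗ b.2) - b.2 ∘ₗ (T.l1 ∘ₗ a.2))

/-- `l̃₂((x,φ), n) = ½ l₂(x,n) + ½ φ(l₁(n))`. -/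
noncomputable def tl2' (T : TwoTermLinfty G0 G1) (a : G0 × (G0 →ₗ[ℝ] G1)) (n : G1) : G1 :=
  (1/2 : ℝ) • T.l2' a.1 n + (1/2 : ℝ) • a.2 (T.l1 n)

/-- `l̃₃` on three degree-0 elements. -/
noncomputable def tl3 (T : TwoTermLinfty G0 G1) (a b c : G0 × (G0 →ₗ[ℝ] G1)) : G1 :=
  -(1/2 : ℝ) • T.l3 a.1 b.1 c.1
  - (1/2 : ℝ) • (c.2 (T.l2 a.1 b.1) + a.2 (T.l2 b.1 c.1) + b.2 (T.l2 c.1 a.1))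
  - (1/4 : ℝ) • (c.2 (T.l1 (a.2 b.1)) - c.2 (T.l1 (b.2 a.1))
      + a.2 (T.l1 (b.2 c.1)) - a.2 (T.l1 (c.2 b.1))
      + b.2 (T.l1 (c.2 a.1)) - b.2 (T.l1 (a.2 c.1)))
  - (1/4 : ℝ) • (T.l2' a.1 (b.2 c.1) - T.l2' a.1 (c.2 b.1)
      + T.l2' b.1 (c.2 a.1) - T.l2' b.1 (a.2 c.1)
      + T.l2' c.1 (a.2 b.1) - T.l2' c.1 (b.2 a.1))

/-- `F₀(x,φ) = x`. -/
def F0 (a : G0 × (G0 →ₗ[ℝ] G1)) : G0 := a.1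

/-- `F₁ = id`. -/
def F1 (n : G1) : G1 := n

/-- `F₂((x,φ),(y,ψ)) = ½(φ(y) − ψ(x))`. -/
noncomputable def F2 (a b : G0 × (G0 →ₗ[ℝ] G1)) : G1 := (1/2 : ℝ) • (a.2 b.1 - b.2 a.1)

end Tilde

/-- Theorem 4.8 of Lang–Sheng–Xu: `(F₀, F₁, F₂)` is an L∞-algebra homomorphism from
the associated 2-term L∞-algebra `g̃` to the original one `g`. -/
theorem F_is_Linfty_homomorphism {G0 G1 : Type*} [AddCommGroup G0] [Module ℝ G0]
    [AddCommGroup G1] [Module ℝ G1] (T : TwoTermLinfty G0 G1) :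
    -- (i) F₀ ∘ l̃₁ = l₁ ∘ F₁
    (∀ n : G1, F0 (tl1 T n) = T.l1 (F1 n)) ∧
    -- (ii) F₀(l̃₂(a,b)) − l₂(F₀(a),F₀(b)) = l₁(F₂(a,b))
    (∀ a b : G0 × (G0 →ₗ[ℝ] G1),
      F0 (tl2 T a b) - T.l2 (F0 a) (F0 b) = T.l1 (F2 a b)) ∧
    -- (iii) F₁(l̃₂(a,n)) − l₂(F₀(a),F₁(n)) = F₂(a, l̃₁(n))
    (∀ (a : G0 × (G0 →ₗ[ℝ] G1)) (n : G1),
      F1 (tl2' T a n) - T.l2' (F0 a) (F1 n) = F2 a (tl1 T n)) ∧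
    -- (iv) compatibility of F₂ with l̃₃ and l₃
    (∀ a b c : G0 × (G0 →ₗ[ℝ] G1),
      F2 (tl2 T a b) c + F2 (tl2 T b c) a + F2 (tl2 T c a) b + F1 (tl3 T a b c)
        = T.l2' (F0 a) (F2 b c) + T.l2' (F0 b) (F2 c a) + T.l2' (F0 c) (F2 a b)
          + T.l3 (F0 a) (F0 b) (F0 c)) := by
  refine ⟨fun n => rfl, fun a b => ?_, fun a n => ?_, fun a b c => ?_⟩
  · simp only [F0, F2, tl2, map_smul, map_sub]
    module
  · simp only [F0, F1, F2, tl1, tl2', LinearMap.flip_apply]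
    module
  · obtain ⟨x, p⟩ := a
    obtain ⟨y, q⟩ := b
    obtain ⟨z, r⟩ := c
    have h1 : T.l3 y z x = T.l3 x y z := by
      rw [T.alt₂ y z x, T.alt₁ y x z, neg_neg]
    have h2 : T.l3 z x y = T.l3 x y z := by
      rw [T.alt₁ z x y, T.alt₂ x z y, neg_neg]
    simp only [F0, F1, F2, tl2, tl3, map_smul, map_sub, map_add, LinearMap.flip_apply,
      LinearMap.add_apply, LinearMap.sub_apply, LinearMap.smul_apply, LinearMap.comp_apply,
      h1, h2, T.skew y x, T.skew z y, T.skew x z, map_neg]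
    module
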